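/- Injectivity of the embedding 𝓘 of probability measures into linear forms on C²_Lip. Let H be a separable real Hilbert space and let μ₁, μ₂ be Borel probability measures on H with ∫_H ‖x‖_H μ₁(dx) < ∞ and ∫_H ‖x‖_H μ₂(dx) < ∞. If ∫_H φ(x) μ₁(dx) = ∫_H φ(x) μ₂(dx) for every φ ∈ C²_Lip(H, ℝ), then μ₁ = μ₂. Equivalently, the map 𝓘 sending such a measure μ to the linear functional C²_Lip(H,ℝ) ∋ φ ↦ ∫_H φ dμ is injective. (Each φ ∈ C²_Lip(H,ℝ) is globally Lipschitz, so the integrals exist.) -/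

import Mathlib

open MeasureTheory
open scoped ENNReal NNReal

/-- The `C^n_Lip` norm of the paper:
`‖φ‖_{C^n_Lip} = ‖φ(0)‖ + Σ_{i=1}^n sup_v ‖φ^{(i)}(v)‖ + sup_{v≠w} ‖φ^{(n)}(v)−φ^{(n)}(w)‖/‖v−w‖`,
as an element of `[0,∞]`. -/
noncomputable def CnLipNorm {V₁ V₂ : Type*} [NormedAddCommGroup V₁] [NormedSpace ℝ V₁]
    [NormedAddCommGroup V₂] [NormedSpace ℝ V₂] (n : ℕ) (φ : V₁ → V₂) : ℝ≥0∞ :=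
  (‖φ 0‖₊ : ℝ≥0∞)
    + ∑ i ∈ Finset.Icc 1 n, ⨆ v : V₁, (‖iteratedFDeriv ℝ i φ v‖₊ : ℝ≥0∞)
    + ⨆ (v : V₁) (w : V₁) (_ : v ≠ w),
        (‖iteratedFDeriv ℝ n φ v - iteratedFDeriv ℝ n φ w‖₊ : ℝ≥0∞) / (‖v - w‖₊ : ℝ≥0∞)

lemma CnLipNorm_comp_lt_top {H : Type*} [NormedAddCommGroup H] [NormedSpace ℝ H]
    (g : ℝ → ℝ) (hg : ContDiff ℝ 3 g) (hb : ∀ n x, |iteratedDeriv n g x| ≤ 1) (L : H →L[ℝ] ℝ) :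
    CnLipNorm 2 (g ∘ L) < ⊤ := by
  have hbd : ∀ i : ℕ, i ≤ 3 → ∀ v, ‖iteratedFDeriv ℝ i (g ∘ L) v‖ ≤ ‖L‖ ^ i := by
    intro i hi v
    rw [L.iteratedFDeriv_comp_right hg v (by exact_mod_cast hi)]
    refine (ContinuousMultilinearMap.norm_compContinuousLinearMap_le _ _).trans ?_
    rw [norm_iteratedFDeriv_eq_norm_iteratedDeriv]
    simpa using mul_le_mul_of_nonneg_right (hb i (L v)) (by positivity : 0 ≤ ‖L‖ ^ i)
  have hbd' : ∀ i : ℕ, i ≤ 3 → ∀ v, ‖iteratedFDeriv ℝ i (g ∘ L) v‖₊ ≤ ‖L‖₊ ^ i := by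
    intro i hi v
    exact_mod_cast hbd i hi v
  have hcd : ContDiff ℝ 3 (g ∘ L) := hg.comp L.contDiff
  have hlip : ∀ v w, ‖iteratedFDeriv ℝ 2 (g ∘ L) v - iteratedFDeriv ℝ 2 (g ∘ L) w‖₊
      ≤ ‖L‖₊ ^ 3 * ‖v - w‖₊ := by
    intro v w
    have hh : ‖iteratedFDeriv ℝ 2 (g ∘ L) v - iteratedFDeriv ℝ 2 (g ∘ L) w‖
        ≤ ‖L‖ ^ 3 * ‖v - w‖ := by
      refine Convex.norm_image_sub_le_of_norm_fderiv_le (𝕜 := ℝ) (s := Set.univ)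
        (fun x _ => (hcd.differentiable_iteratedFDeriv (m := 2) (by norm_cast)) x)
        (fun x _ => ?_) convex_univ (Set.mem_univ _) (Set.mem_univ _)
      have := hbd 3 le_rfl x
      rwa [← norm_fderiv_iteratedFDeriv] at this
    exact_mod_cast hh
  unfold CnLipNorm
  refine ENNReal.add_lt_top.2 ⟨ENNReal.coe_lt_top, ?_⟩
  refine ENNReal.sum_lt_top.2 fun i hi => ?_
  have hi' : i ≤ 3 := by have := (Finset.mem_Icc.1 hi).2; omega
  refine lt_of_le_of_lt (b := ((‖L‖₊ ^ i : ℝ≥0) : ℝ≥0∞) + ((‖L‖₊ ^ 3 : ℝ≥0) : ℝ≥0∞)) ?_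
    (ENNReal.add_lt_top.2 ⟨ENNReal.coe_lt_top, ENNReal.coe_lt_top⟩)
  refine iSup_le fun v => add_le_add (ENNReal.coe_le_coe.2 (hbd' i hi' v)) ?_
  refine iSup_le fun v => iSup_le fun w => iSup_le fun _ => ?_
  refine ENNReal.div_le_of_le_mul ?_
  exact_mod_cast hlip v w

/-- **Injectivity of the embedding `𝓘` of probability measures into linear forms on `C²_Lip`**:
two Borel probability measures on a separable real Hilbert space with finite first absolute
moments which integrate every `φ ∈ C²_Lip(H,ℝ)` identically are equal. -/
theorem measure_ext_of_C2Lip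
    {H : Type*}
    [NormedAddCommGroup H] [InnerProductSpace ℝ H] [CompleteSpace H]
    [SecondCountableTopology H] [MeasurableSpace H] [BorelSpace H]
    (μ₁ μ₂ : Measure H) [IsProbabilityMeasure μ₁] [IsProbabilityMeasure μ₂]
    (hm₁ : (∫⁻ x, (‖x‖₊ : ℝ≥0∞) ∂μ₁) < ⊤) (hm₂ : (∫⁻ x, (‖x‖₊ : ℝ≥0∞) ∂μ₂) < ⊤)
    (h : ∀ φ : H → ℝ, ContDiff ℝ 2 φ → CnLipNorm 2 φ < ⊤ →
      ∫ x, φ x ∂μ₁ = ∫ x, φ x ∂μ₂) :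
    μ₁ = μ₂ := by
  have key : ∀ g : ℝ → ℝ, ContDiff ℝ 3 g → (∀ n x, |iteratedDeriv n g x| ≤ 1) → ∀ t : H,
      ∫ x, g (inner ℝ x t) ∂μ₁ = ∫ x, g (inner ℝ x t) ∂μ₂ := by
    intro g hg hb t
    have := h (g ∘ innerSL ℝ t) ((hg.of_le (by norm_cast)).comp (innerSL ℝ t).contDiff)
      (CnLipNorm_comp_lt_top g hg hb _)
    simpa [real_inner_comm] using this
  refine Measure.ext_of_charFun (funext fun t => ?_)
  have hdec : ∀ μ : Measure H, IsProbabilityMeasure μ → charFun μ t =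
      ((∫ x, Real.cos (inner ℝ x t) ∂μ : ℝ) : ℂ)
        + ((∫ x, Real.sin (inner ℝ x t) ∂μ : ℝ) : ℂ) * Complex.I := by
    intro μ _
    have hc : Integrable (fun x => Real.cos (inner ℝ x t)) μ :=
      Integrable.of_bound (C := 1) (by fun_prop) (ae_of_all _ fun x => Real.abs_cos_le_one _)
    have hs : Integrable (fun x => Real.sin (inner ℝ x t)) μ :=
      Integrable.of_bound (C := 1) (by fun_prop) (ae_of_all _ fun x => Real.abs_sin_le_one _)
    rw [charFun_apply, ← integral_complex_ofReal, ← integral_complex_ofReal,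
      ← integral_mul_const, ← integral_add hc.ofReal (hs.ofReal.mul_const _)]
    simp [Complex.exp_mul_I]
  rw [hdec μ₁ inferInstance, hdec μ₂ inferInstance,
    key _ Real.contDiff_cos Real.abs_iteratedDeriv_cos_le_one,
    key _ Real.contDiff_sin Real.abs_iteratedDeriv_sin_le_one]
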